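/- Let B = (G, P, ι) be an acyclic generalized Bayesian network whose initial distribution ι is a product distribution (a classical Bayesian network), and let I = d-sep(G). Then the CPT-I semantics of B is the singleton consisting of the standard BN semantics: [B]_{Cpt-I} = {dist_BN(B)}. That is, dist_BN(B) is the unique distribution μ over assignments of V with μ|_{Init(G)} = ι that is strongly CPT-consistent for every non-initial node and satisfies I ⊆ Indep(μ). -/

import Mathlib

open Filter
open scoped Classical

noncomputable section

namespace GBNPaper

variable {V : Type} [Fintype V] [DecidableEq V]

/-- A distribution over a finite type: nonnegative values summing to one. -/
def IsDist {α : Type} [Fintype α] (μ : α → ℝ) : Prop :=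
  (∀ a, 0 ≤ μ a) ∧ ∑ a, μ a = 1

/-- The set of parents of a node `X` w.r.t. an edge set `E`. -/
def Pre (E : Finset (V × V)) (X : V) : Finset V :=
  (E.filter fun e => e.2 = X).image Prod.fst

/-- The set of initial (parentless) nodes. -/
def InitSet (E : Finset (V × V)) : Finset V :=
  Finset.univ.filter fun X => Pre E X = ∅

/-- Assignments over a subset `U` of the nodes. -/
abbrev Asg (U : Finset V) : Type := {x // x ∈ U} → Bool

/-- A full assignment `b` agrees with a partial assignment `d` on `U`. -/
abbrev Agrees (b : V → Bool) (U : Finset V) (d : Asg U) : Prop :=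
  ∀ x : {x // x ∈ U}, b x.1 = d x

/-- A generalized Bayesian network over node set `V`. -/
structure GBN (V : Type) [Fintype V] [DecidableEq V] where
  /-- the directed edges -/
  edges : Finset (V × V)
  /-- CPT entries: the probability of `X = T` given an assignment of the parents of `X` -/
  cpt : (X : V) → Asg (Pre edges X) → ℝ
  cpt_nonneg : ∀ X b, 0 ≤ cpt X b
  cpt_le_one : ∀ X b, cpt X b ≤ 1
  /-- the initial distribution over assignments of the initial nodes -/
  ι : Asg (InitSet edges) → ℝ
  ι_dist : IsDist ι

/-- Probability of an event (set of full assignments) under `μ`. -/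
def probIf (μ : (V → Bool) → ℝ) (p : (V → Bool) → Prop) : ℝ :=
  ∑ b : V → Bool, if p b then μ b else 0

/-- The marginal distribution of `μ` on `U`. -/
def marginal (μ : (V → Bool) → ℝ) (U : Finset V) : Asg U → ℝ :=
  fun d => probIf μ fun b => Agrees b U d

/-- `Pr(X = v | parents as given by b)`. -/
def copyProb (B : GBN V) (X : V) (v : Bool) (b : V → Bool) : ℝ :=
  if v then B.cpt X (fun p => b p.1) else 1 - B.cpt X (fun p => b p.1)

/-- The standard BN semantics (chain rule) of a GBN. -/
def distBN (B : GBN V) (b : V → Bool) : ℝ :=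
  B.ι (fun x => b x.1) *
    ∏ X ∈ Finset.univ \ InitSet B.edges, copyProb B X (b X) b

/-- The edge set contains no directed cycle. -/
def Acyclic (E : Finset (V × V)) : Prop :=
  ∀ x : V, ¬ Relation.TransGen (fun a b => (a, b) ∈ E) x x

/-- `C` is a cutset: every directed cycle contains a node of `C`. -/
def IsCutset (E : Finset (V × V)) (C : Finset V) : Prop :=
  ∀ x : V, ¬ Relation.TransGen (fun a b => (a, b) ∈ E ∧ a ∉ C ∧ b ∉ C) x x

/-- The standard BN semantics of the `C`-dissected GBN `B↑C↑γ`, as a joint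
distribution over assignments of the original nodes `V` together with
assignments of the copies `C'` of the cutset nodes. -/
def distDissect (B : GBN V) (C : Finset V) (γ : Asg C → ℝ)
    (b : V → Bool) (c : Asg C) : ℝ :=
  B.ι (fun x => b x.1) * γ (fun x => b x.1) *
    (∏ X ∈ (Finset.univ \ InitSet B.edges) \ C, copyProb B X (b X) b) *
    ∏ Y ∈ C.attach, copyProb B Y.1 (c Y) b

/-- `Next(B,C,γ)`: restrict `dist_BN(B↑C↑γ)` to `(V∖C) ∪ C'` and re-identify
the copies with the original cutset nodes. -/
def Next (B : GBN V) (C : Finset V) (γ : Asg C → ℝ) (a : V → Bool) : ℝ :=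
  ∑ b : V → Bool,
    if ∀ x : V, x ∉ C → b x = a x then distDissect B C γ b (fun y => a y.1) else 0

/-- `Extend(B,C,γ) = dist_BN(B↑C↑γ)|_V`. -/
def Extend (B : GBN V) (C : Finset V) (γ : Asg C → ℝ) (a : V → Bool) : ℝ :=
  ∑ c : Asg C, distDissect B C γ a c

/-- Dirac (point) distribution. -/
def DiracD {α : Type} [DecidableEq α] (b : α) : α → ℝ := fun c => if c = b then 1 else 0

/-- Transition matrix of the cutset Markov chain `M_{B↑C}`:
`P(b,c) = Next(B,C,Dirac(b))|_C (c)`. -/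
def cutsetP (B : GBN V) (C : Finset V) (b c : Asg C) : ℝ :=
  marginal (Next B C (DiracD b)) C c

/-- Vector-matrix multiplication `γ·P`. -/
def vecMul {α : Type} [Fintype α] (γ : α → ℝ) (P : α → α → ℝ) : α → ℝ :=
  fun c => ∑ b, γ b * P b c

/-- The transient distributions `γ0·P^n`. -/
def matIter {α : Type} [Fintype α] (P : α → α → ℝ) (γ0 : α → ℝ) : ℕ → (α → ℝ)
  | 0 => γ0
  | n + 1 => vecMul (matIter P γ0 n) P

/-- The sequence `γ_{n+1} = Next(B,C,γ_n)|_C`. -/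
def nextSeq (B : GBN V) (C : Finset V) (γ0 : Asg C → ℝ) : ℕ → (Asg C → ℝ)
  | 0 => γ0
  | n + 1 => marginal (Next B C (nextSeq B C γ0 n)) C

/-- Cesàro averages of a sequence of vectors. -/
def cesaro {α : Type} (f : ℕ → α → ℝ) (n : ℕ) : α → ℝ :=
  fun a => (∑ i ∈ Finset.range (n + 1), f i a) / (n + 1)

/-- The Markov chain semantics `[B]_{MC-C}`: image of
`γ0 ↦ Extend(B,C,lrf^{γ0})` over all initial cutset distributions `γ0`,
where `lrf^{γ0}` is the Cesàro limit of the transient distributions. -/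
def MCSem (B : GBN V) (C : Finset V) : Set ((V → Bool) → ℝ) :=
  { μ | ∃ γ0 γ, IsDist γ0 ∧
      Tendsto (cesaro (matIter (cutsetP B C) γ0)) atTop (nhds γ) ∧
      μ = Extend B C γ }

/-- The limit semantics `[B]_{Lim-C}`. -/
def LimSem (B : GBN V) (C : Finset V) : Set ((V → Bool) → ℝ) :=
  { μ | ∃ γ0 γ, IsDist γ0 ∧
      Tendsto (nextSeq B C γ0) atTop (nhds γ) ∧
      μ = Extend B C γ }

/-- The limit average semantics `[B]_{LimAvg-C}`. -/
def LimAvgSem (B : GBN V) (C : Finset V) : Set ((V → Bool) → ℝ) :=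
  { μ | ∃ γ0 γ, IsDist γ0 ∧
      Tendsto (cesaro (nextSeq B C γ0)) atTop (nhds γ) ∧
      μ = Extend B C γ }

/-- The Markov chain semantics in stationary-distribution form:
`{ Extend(B,C,γ) : γ a distribution with γ = γ·P }`. -/
def MCStatSem (B : GBN V) (C : Finset V) : Set ((V → Bool) → ℝ) :=
  { μ | ∃ γ : Asg C → ℝ, IsDist γ ∧ γ = vecMul γ (cutsetP B C) ∧ μ = Extend B C γ }

/-- Strong CPT-consistency of `μ` for node `X`. -/
def StrongCPT (B : GBN V) (μ : (V → Bool) → ℝ) (X : V) : Prop :=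
  ∀ c : Asg (Pre B.edges X),
    probIf μ (fun f => f X = true ∧ Agrees f (Pre B.edges X) c) =
      probIf μ (fun f => Agrees f (Pre B.edges X) c) * B.cpt X c

/-- Weak CPT-consistency of `μ` for node `X`. -/
def WeakCPT (B : GBN V) (μ : (V → Bool) → ℝ) (X : V) : Prop :=
  probIf μ (fun f => f X = true) =
    ∑ c : Asg (Pre B.edges X),
      probIf μ (fun f => Agrees f (Pre B.edges X) c) * B.cpt X c

/-- The CPT semantics `[B]_{Cpt}`. -/
def CptSem (B : GBN V) : Set ((V → Bool) → ℝ) :=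
  { μ | IsDist μ ∧ marginal μ (InitSet B.edges) = B.ι ∧
      ∀ X, X ∉ InitSet B.edges → StrongCPT B μ X }

/-- `(X ⊥ Y | Z) ∈ Indep(μ)`. -/
def IndepTriple (μ : (V → Bool) → ℝ) (X Y Z : Finset V) : Prop :=
  ∀ (a : Asg X) (b : Asg Y) (c : Asg Z),
    probIf μ (fun f => Agrees f Y b ∧ Agrees f Z c) = 0 ∨
    probIf μ (fun f => Agrees f X a ∧ Agrees f Y b ∧ Agrees f Z c) /
        probIf μ (fun f => Agrees f Y b ∧ Agrees f Z c) =
      probIf μ (fun f => Agrees f X a ∧ Agrees f Z c) /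
        probIf μ (fun f => Agrees f Z c)

def PairwiseDisjoint3 (X Y Z : Finset V) : Prop :=
  Disjoint X Y ∧ Disjoint X Z ∧ Disjoint Y Z

/-- `Indep(μ)` as a set of triples. -/
def IndepSet (μ : (V → Bool) → ℝ) : Set (Finset V × Finset V × Finset V) :=
  { t | PairwiseDisjoint3 t.1 t.2.1 t.2.2 ∧ IndepTriple μ t.1 t.2.1 t.2.2 }

/-- The CPT-I semantics `[B]_{Cpt-I}`. -/
def CptISem (B : GBN V) (I : Set (Finset V × Finset V × Finset V)) :
    Set ((V → Bool) → ℝ) :=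
  { μ | μ ∈ CptSem B ∧ I ⊆ IndepSet μ }

/-! d-separation -/

def Adjacent (E : Finset (V × V)) (x y : V) : Prop := (x, y) ∈ E ∨ (y, x) ∈ E

/-- Reachability along directed edges (including the node itself). -/
def Reaches (E : Finset (V × V)) (x y : V) : Prop :=
  Relation.ReflTransGen (fun a b => (a, b) ∈ E) x y

/-- An intermediate triple `a, w, b` on a path blocks it given `Z`:
either `w ∈ Z` and `w` lies in a chain or a fork, or `w` lies in a collider
and no node reachable from `w` (including `w`) is in `Z`. -/
def BlockedTriple (E : Finset (V × V)) (Z : Finset V) (a w b : V) : Prop :=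
  (w ∈ Z ∧ (((a, w) ∈ E ∧ (w, b) ∈ E) ∨ ((b, w) ∈ E ∧ (w, a) ∈ E) ∨
      ((w, a) ∈ E ∧ (w, b) ∈ E))) ∨
  ((a, w) ∈ E ∧ (b, w) ∈ E ∧ ∀ d, Reaches E w d → d ∉ Z)

/-- A path (as a list of nodes) is blocked given `Z`. -/
def Blocked (E : Finset (V × V)) (Z : Finset V) (W : List V) : Prop :=
  ∃ l₁ a w b l₂, W = l₁ ++ a :: w :: b :: l₂ ∧ BlockedTriple E Z a w b

/-- `x` and `y` are d-separated given `Z`: every undirected simple path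
from `x` to `y` is blocked given `Z`. -/
def DSepNodes (E : Finset (V × V)) (x y : V) (Z : Finset V) : Prop :=
  ∀ W : List V, W.Chain' (Adjacent E) → W.Nodup →
    W.head? = some x → W.getLast? = some y → Blocked E Z W

def DSep (E : Finset (V × V)) (X Y Z : Finset V) : Prop :=
  ∀ x ∈ X, ∀ y ∈ Y, DSepNodes E x y Z

/-- `d-sep(G)` as a set of triples of pairwise disjoint node sets. -/
def DSepSet (E : Finset (V × V)) : Set (Finset V × Finset V × Finset V) :=
  { t | PairwiseDisjoint3 t.1 t.2.1 t.2.2 ∧ DSep E t.1 t.2.1 t.2.2 }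

/-- `Close(G)`: add an edge between every ordered pair of distinct initial nodes. -/
def Close (E : Finset (V × V)) : Finset (V × V) :=
  E ∪ ((InitSet E ×ˢ InitSet E).filter fun p => p.1 ≠ p.2)

/-- `G[C]`: remove all edges into nodes of `C` (so the nodes of `C` are initial). -/
def CutGraph (E : Finset (V × V)) (C : Finset V) : Finset (V × V) :=
  E.filter fun e => e.2 ∉ C

/-- `ι` is a product distribution: it factorizes into its single-node marginals,
i.e. the initial nodes are mutually independent under `ι`. -/
def IsProductDist {U : Finset V} (ι : Asg U → ℝ) : Prop :=
  ∀ b : Asg U,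
    ι b = ∏ x : {x // x ∈ U}, ∑ b' : Asg U, if b' x = b x then ι b' else 0

/-! Markov chain notions -/

/-- Reachability in the underlying graph of a DTMC. -/
def MCReach {α : Type} (P : α → α → ℝ) (x y : α) : Prop :=
  Relation.ReflTransGen (fun a b => 0 < P a b) x y

/-- Bottom strongly connected component of a DTMC: nonempty, closed under
reachability, and strongly connected. -/
def IsBSCC {α : Type} (P : α → α → ℝ) (D : Set α) : Prop :=
  D.Nonempty ∧ (∀ x ∈ D, ∀ y, MCReach P x y → y ∈ D) ∧
    ∀ x ∈ D, ∀ y ∈ D, MCReach P x y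

/-- Walks of a given length along positive-probability transitions. -/
def walkLen {α : Type} (P : α → α → ℝ) : ℕ → α → α → Prop
  | 0, x, y => x = y
  | n + 1, x, y => ∃ z, 0 < P x z ∧ walkLen P n z y

/-- The lengths of the cycles of `D`. -/
def CycleLens {α : Type} (P : α → α → ℝ) (D : Set α) : Set ℕ :=
  { n | 0 < n ∧ ∃ x ∈ D, walkLen P n x x }

/-- `D` is aperiodic: the gcd of the lengths of its cycles equals 1. -/
def AperiodicBSCC {α : Type} (P : α → α → ℝ) (D : Set α) : Prop :=
  ∀ d : ℕ, (∀ n ∈ CycleLens P D, d ∣ n) → d = 1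

/-- `D` is periodic: the gcd of the lengths of its cycles is greater than 1. -/
def PeriodicBSCC {α : Type} (P : α → α → ℝ) (D : Set α) : Prop :=
  ∃ d : ℕ, 1 < d ∧ ∀ n ∈ CycleLens P D, d ∣ n

/-- A GBN is smooth if all CPT entries and all values of `ι` lie in `(0,1)`. -/
def Smooth (B : GBN V) : Prop :=
  (∀ X b, B.cpt X b ∈ Set.Ioo (0 : ℝ) 1) ∧ ∀ d, B.ι d ∈ Set.Ioo (0 : ℝ) 1


set_option linter.unusedSectionVars false

/-! ### Directed graphs -/

theorem mem_Pre {E : Finset (V × V)} {X p : V} : p ∈ Pre E X ↔ (p, X) ∈ E := by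
  simp [Pre]

theorem mem_InitSet {E : Finset (V × V)} {X : V} : X ∈ InitSet E ↔ Pre E X = ∅ := by
  simp [InitSet]

theorem Acyclic.not_mem_symm {E : Finset (V × V)} (hE : Acyclic E) {a b : V}
    (h : (a, b) ∈ E) : (b, a) ∉ E :=
  fun h' => hE a (Relation.TransGen.tail (Relation.TransGen.single h) h')

theorem Acyclic.not_mem_self {E : Finset (V × V)} (hE : Acyclic E) (a : V) : (a, a) ∉ E :=
  fun h => hE a (Relation.TransGen.single h)

/-- An acyclic graph admits a numbering of its nodes that increases along edges. -/
theorem Acyclic.exists_rank {E : Finset (V × V)} (hE : Acyclic E) :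
    ∃ r : V → ℕ, ∀ a b, (a, b) ∈ E → r a < r b := by
  refine ⟨fun v => (Finset.univ.filter fun u =>
    Relation.TransGen (fun a b => (a, b) ∈ E) u v).card, fun a b hab => ?_⟩
  refine Finset.card_lt_card (Finset.ssubset_iff_of_subset ?_ |>.2 ⟨a, ?_, ?_⟩)
  · intro u hu
    simp only [Finset.mem_filter, Finset.mem_univ, true_and] at hu ⊢
    exact hu.tail hab
  · simpa using Relation.TransGen.single hab
  · simpa using hE a

/-- A set of nodes closed under parents. -/
def Ancestral (E : Finset (V × V)) (A : Finset V) : Prop :=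
  ∀ a b, (a, b) ∈ E → b ∈ A → a ∈ A

theorem Ancestral.of_transGen {E : Finset (V × V)} {A : Finset V} (hA : Ancestral E A)
    {a b : V} (h : Relation.TransGen (fun a b => (a, b) ∈ E) a b) (hb : b ∈ A) : a ∈ A := by
  induction h using Relation.TransGen.head_induction_on with
  | single h => exact hA _ _ h hb
  | head h _ ih => exact hA _ _ h ih

/-! ### Active walks -/

/-- A walk all of whose consecutive triples are unblocked given `Z`. -/
def ActiveWalk (E : Finset (V × V)) (Z : Finset V) : List V → Prop
  | [] => True
  | [_] => True
  | [a, b] => Adjacent E a b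
  | a :: w :: b :: l => Adjacent E a w ∧ ¬ BlockedTriple E Z a w b ∧ ActiveWalk E Z (w :: b :: l)

namespace ActiveWalk

variable {E : Finset (V × V)} {Z : Finset V}

theorem adjacent {a b : V} {l : List V} (h : ActiveWalk E Z (a :: b :: l)) : Adjacent E a b := by
  cases l with
  | nil => exact h
  | cons c l => exact h.1

theorem tail {a : V} {l : List V} (h : ActiveWalk E Z (a :: l)) : ActiveWalk E Z l := by
  match l, h with
  | [], _ => trivial
  | [_], _ => trivial
  | _ :: _ :: _, h => exact h.2.2

theorem of_append_right {l₁ l₂ : List V} (h : ActiveWalk E Z (l₁ ++ l₂)) :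
    ActiveWalk E Z l₂ := by
  induction l₁ with
  | nil => exact h
  | cons a l ih => exact ih h.tail

theorem of_append_left {l₁ l₂ : List V} (h : ActiveWalk E Z (l₁ ++ l₂)) :
    ActiveWalk E Z l₁ := by
  induction l₁ with
  | nil => trivial
  | cons a l ih =>
    match l, h, ih with
    | [], _, _ => trivial
    | [_], h, _ => exact h.adjacent
    | _ :: _ :: _, h, ih => exact ⟨h.1, h.2.1, ih h.2.2⟩

theorem isChain {l : List V} (h : ActiveWalk E Z l) : l.IsChain (Adjacent E) := by
  induction l with
  | nil => exact List.IsChain.nil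
  | cons a l ih =>
    cases l with
    | nil => exact List.IsChain.singleton a
    | cons b l => exact List.IsChain.cons_cons h.adjacent (ih h.tail)

theorem not_blocked {l : List V} (h : ActiveWalk E Z l) : ¬ Blocked E Z l := by
  rintro ⟨l₁, a, w, b, l₂, rfl, hb⟩
  exact (of_append_right h).2.1 hb

/-- Two active walks meeting in a node can be glued there if the resulting triple is unblocked. -/
theorem glue {l₁ l₃ : List V} {a w b : V} (h₁ : ActiveWalk E Z (l₁ ++ [a, w]))
    (h₂ : ActiveWalk E Z (w :: b :: l₃)) (h : ¬ BlockedTriple E Z a w b) :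
    ActiveWalk E Z (l₁ ++ a :: w :: b :: l₃) := by
  induction l₁ with
  | nil => exact ⟨h₁, h, h₂⟩
  | cons c l ih =>
    match l, h₁, ih with
    | [], h₁, ih => exact ⟨h₁.1, h₁.2.1, ih h₁.2.2⟩
    | [_], h₁, ih => exact ⟨h₁.1, h₁.2.1, ih h₁.2.2⟩
    | _ :: _ :: _, h₁, ih => exact ⟨h₁.1, h₁.2.1, ih h₁.2.2⟩

/-- An active walk that leaves `w` along an edge out of `w` and finally moves against an edge
passes through a collider, so `w` is an ancestor of `Z`. -/
theorem exists_reaches (m : List V) {w u w' : V} (h : ActiveWalk E Z (w :: (m ++ [u, w'])))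
    (hfirst : ∀ v ∈ (m ++ [u]).head?, (w, v) ∈ E) (hlast : (w', u) ∈ E) :
    ∃ d ∈ Z, Reaches E w d := by
  induction m generalizing w with
  | nil =>
    have hu : (w, u) ∈ E := hfirst u (by simp)
    have := h.2.1
    simp only [BlockedTriple, not_or, not_and, not_forall, not_not] at this
    obtain ⟨d, hd, hz⟩ := this.2 hu hlast
    exact ⟨d, hz, Relation.ReflTransGen.head hu hd⟩
  | cons c m ih =>
    have hc : (w, c) ∈ E := hfirst c (by simp)
    obtain ⟨v, l, hl, hv⟩ : ∃ v l, m ++ [u, w'] = v :: l ∧ (m ++ [u]).head? = some v := by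
      cases m <;> simp
    rw [List.cons_append, hl] at h
    rcases h.tail.adjacent with hcv | hvc
    · obtain ⟨d, hz, hd⟩ := ih (w := c) (by rw [hl]; exact h.tail) (by simpa [hv] using hcv)
      exact ⟨d, hz, Relation.ReflTransGen.head hc hd⟩
    · have := h.2.1
      simp only [BlockedTriple, not_or, not_and, not_forall, not_not] at this
      obtain ⟨d, hd, hz⟩ := this.2 hc hvc
      exact ⟨d, hz, Relation.ReflTransGen.head hc hd⟩

theorem exists_eq_append_of_not_nodup {l : List V} (h : ¬ l.Nodup) :
    ∃ w l₁ l₂ l₃, l = l₁ ++ w :: (l₂ ++ w :: l₃) := by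
  induction l with
  | nil => simp at h
  | cons a l ih =>
    by_cases ha : a ∈ l
    · obtain ⟨s, t, rfl⟩ := List.append_of_mem ha
      exact ⟨a, [], s, t, rfl⟩
    · obtain ⟨w, l₁, l₂, l₃, rfl⟩ := ih fun hl => h (List.nodup_cons.2 ⟨ha, hl⟩)
      exact ⟨w, a :: l₁, l₂, l₃, rfl⟩

theorem collider_of_mem {a w b : V} (h : ¬ BlockedTriple E Z a w b) (hw : w ∈ Z)
    (ha : Adjacent E a w) (hb : Adjacent E w b) : (a, w) ∈ E ∧ (b, w) ∈ E := by
  unfold BlockedTriple at h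
  unfold Adjacent at ha hb
  tauto

/-- A closed segment of an active walk can be cut out. -/
theorem shortcut (hE : Acyclic E) {l₁ l₂ l₃ : List V} {w : V}
    (h : ActiveWalk E Z (l₁ ++ w :: (l₂ ++ w :: l₃))) : ActiveWalk E Z (l₁ ++ w :: l₃) := by
  have hl₃ : ActiveWalk E Z (w :: l₃) := by
    have : l₁ ++ w :: (l₂ ++ w :: l₃) = (l₁ ++ w :: l₂) ++ w :: l₃ := by simp
    rw [this] at h
    exact of_append_right h
  have hl₁ : ActiveWalk E Z (l₁ ++ [w]) := by
    have : l₁ ++ w :: (l₂ ++ w :: l₃) = (l₁ ++ [w]) ++ (l₂ ++ w :: l₃) := by simp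
    rw [this] at h
    exact of_append_left h
  rcases List.eq_nil_or_concat' l₁ with rfl | ⟨l₁, a, rfl⟩
  · exact hl₃
  rcases l₃ with _ | ⟨b, l₃⟩
  · exact hl₁
  have hmid : ActiveWalk E Z (a :: w :: (l₂ ++ w :: b :: l₃)) := by
    rw [List.append_assoc] at h
    exact of_append_right h
  rw [List.append_assoc] at hl₁ ⊢
  refine glue hl₁ hl₃ ?_
  rcases List.eq_nil_or_concat' l₂ with rfl | ⟨m, u, rfl⟩
  · rcases hmid.tail.adjacent with hw | hw <;> exact absurd hw (hE.not_mem_self w)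
  obtain ⟨v, l, hl, hv⟩ : ∃ v l, m ++ [u] = v :: l ∧ (m ++ [u]).head? = some v := by
    cases m <;> simp
  have hseg : ActiveWalk E Z (w :: (m ++ [u, w])) := by
    have := hmid.tail
    have e : w :: (m ++ [u] ++ w :: b :: l₃) = (w :: (m ++ [u, w])) ++ b :: l₃ := by simp
    rw [e] at this
    exact of_append_left this
  have htri₁ : ¬ BlockedTriple E Z a w v := by
    rw [hl] at hmid
    exact hmid.2.1
  have hadj₁ : Adjacent E w v := by
    rw [hl] at hmid
    exact hmid.tail.adjacent
  have hend : ActiveWalk E Z (u :: w :: b :: l₃) := by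
    have e : a :: w :: (m ++ [u] ++ w :: b :: l₃) = (a :: w :: m) ++ u :: w :: b :: l₃ := by simp
    rw [e] at hmid
    exact of_append_right hmid
  have htri₂ := hend.2.1
  have hadj₂ := hend.adjacent
  have key : (w, v) ∈ E → (w, u) ∈ E → ∃ d ∈ Z, Reaches E w d := fun h₁ h₂ =>
    exists_reaches m hseg (by simpa [hv] using h₁) h₂
  have haw := hmid.adjacent
  have hwb := hl₃.adjacent
  rintro (⟨hwZ, hnc⟩ | ⟨h₁, h₂, h₃⟩)
  · have h₁ := (collider_of_mem htri₁ hwZ haw hadj₁).1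
    have h₂ := (collider_of_mem htri₂ hwZ hadj₂ hwb).2
    rcases hnc with h | h | h
    · exact hE.not_mem_symm h₂ h.2
    · exact hE.not_mem_symm h₁ h.2
    · exact hE.not_mem_symm h₁ h.1
  · have hwv : (w, v) ∈ E := by
      rcases hadj₁ with h | h
      · exact h
      · exact absurd (Or.inr ⟨h₁, h, h₃⟩) htri₁
    have hwu : (w, u) ∈ E := by
      rcases hadj₂ with h | h
      · exact absurd (Or.inr ⟨h, h₂, h₃⟩) htri₂
      · exact h
    obtain ⟨d, hd, hr⟩ := key hwv hwu
    exact h₃ d hr hd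

/-- Every active walk contains an active simple path with the same end points. -/
theorem exists_nodup (hE : Acyclic E) (W : List V) (h : ActiveWalk E Z W) :
    ∃ W', ActiveWalk E Z W' ∧ W'.Nodup ∧ W'.head? = W.head? ∧ W'.getLast? = W.getLast? := by
  induction hn : W.length using Nat.strong_induction_on generalizing W with
  | _ n ih =>
    by_cases hW : W.Nodup
    · exact ⟨W, h, hW, rfl, rfl⟩
    · obtain ⟨w, l₁, l₂, l₃, rfl⟩ := exists_eq_append_of_not_nodup hW
      obtain ⟨W', h₁, h₂, h₃, h₄⟩ :=
        ih _ (by subst hn; simp) _ (shortcut hE h) rfl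
      refine ⟨W', h₁, h₂, h₃.trans ?_, h₄.trans ?_⟩
      · cases l₁ <;> simp
      · rw [List.getLast?_append_cons, List.getLast?_append_cons, ← List.cons_append,
          List.getLast?_append_cons]

theorem _root_.GBNPaper.DSepNodes.not_activeWalk (hE : Acyclic E) {x y : V}
    (h : DSepNodes E x y Z) {W : List V} (hx : W.head? = some x) (hy : W.getLast? = some y) :
    ¬ ActiveWalk E Z W := by
  intro hW
  obtain ⟨W', h₁, h₂, h₃, h₄⟩ := exists_nodup hE W hW
  exact h₁.not_blocked (h W' h₁.isChain h₂ (h₃.trans hx) (h₄.trans hy))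

end ActiveWalk

/-! ### Active reachability -/

/-- Nodes reachable from `Y` along active walks; the flag tells whether the last edge points into
the node. -/
inductive ActiveReach (E : Finset (V × V)) (Y Z : Finset V) : V → Bool → Prop
  | start {y : V} : y ∈ Y → ActiveReach E Y Z y false
  | down {u v : V} {d : Bool} :
      ActiveReach E Y Z u d → u ∉ Z → (u, v) ∈ E → ActiveReach E Y Z v true
  | up {u v : V} : ActiveReach E Y Z u false → u ∉ Z → (v, u) ∈ E → ActiveReach E Y Z v false
  | collide {u v e : V} :
      ActiveReach E Y Z u true → e ∈ Z → Reaches E u e → (v, u) ∈ E → ActiveReach E Y Z v false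

namespace ActiveReach

variable {E : Finset (V × V)} {X Y Z : Finset V}

theorem exists_activeWalk (hE : Acyclic E) {v : V} {d : Bool} (h : ActiveReach E Y Z v d) :
    ∃ l, ∃ y ∈ Y, ActiveWalk E Z (v :: l) ∧ (v :: l).getLast? = some y ∧
      ((l = [] ∧ d = false) ∨
        ∃ u l', l = u :: l' ∧ (d = true → (u, v) ∈ E) ∧ (d = false → (v, u) ∈ E)) := by
  induction h with
  | @start y hy => exact ⟨[], y, hy, trivial, rfl, Or.inl ⟨rfl, rfl⟩⟩
  | @down u v d _ hu huv ih =>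
    obtain ⟨l, y, hy, hw, hlast, hl⟩ := ih
    refine ⟨u :: l, y, hy, ?_, by simpa using hlast, Or.inr ⟨u, l, rfl, by simpa, by simp⟩⟩
    rcases l with _ | ⟨a, l⟩
    · exact Or.inr huv
    · refine ⟨Or.inr huv, ?_, hw⟩
      have := hE.not_mem_symm huv
      unfold BlockedTriple
      tauto
  | @up u v _ hu hvu ih =>
    obtain ⟨l, y, hy, hw, hlast, hl⟩ := ih
    refine ⟨u :: l, y, hy, ?_, by simpa using hlast, Or.inr ⟨u, l, rfl, by simp, by simpa⟩⟩
    rcases l with _ | ⟨a, l⟩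
    · exact Or.inl hvu
    · refine ⟨Or.inl hvu, ?_, hw⟩
      obtain ⟨h, -⟩ | ⟨_, _, h, -, hau⟩ := hl
      · simp at h
      · obtain ⟨rfl, rfl⟩ := List.cons.inj h
        have := hE.not_mem_symm (hau rfl)
        unfold BlockedTriple
        tauto
  | @collide u v e _ he hue hvu ih =>
    obtain ⟨l, y, hy, hw, hlast, hl⟩ := ih
    refine ⟨u :: l, y, hy, ?_, by simpa using hlast, Or.inr ⟨u, l, rfl, by simp, by simpa⟩⟩
    rcases l with _ | ⟨a, l⟩
    · exact Or.inl hvu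
    · refine ⟨Or.inl hvu, ?_, hw⟩
      obtain ⟨h, -⟩ | ⟨_, _, h, hau, -⟩ := hl
      · simp at h
      · obtain ⟨rfl, rfl⟩ := List.cons.inj h
        have h₁ := hE.not_mem_symm (hau rfl)
        have h₂ := hE.not_mem_symm hvu
        rintro (⟨-, h⟩ | ⟨-, -, h⟩)
        · tauto
        · exact h e hue he

theorem not_of_dsep (hE : Acyclic E) (hsep : DSep E X Y Z) {x : V} (hx : x ∈ X) {d : Bool} :
    ¬ ActiveReach E Y Z x d := by
  intro h
  obtain ⟨l, y, hy, hw, hlast, -⟩ := h.exists_activeWalk hE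
  exact (hsep x hx y hy).not_activeWalk hE rfl hlast hw

theorem of_reaches {u e : V} (hue : Reaches E u e) (hZ : ∀ d, Reaches E u d → d ∉ Z)
    (h : ∃ d, ActiveReach E Y Z u d) : ∃ d, ActiveReach E Y Z e d := by
  induction hue with
  | refl => exact h
  | tail hr he ih =>
    obtain ⟨d, hd⟩ := ih
    exact ⟨true, hd.down (hZ _ hr) he⟩

theorem of_reaches_start {u y : V} (huy : Reaches E u y) (hZ : ∀ d, Reaches E u d → d ∉ Z)
    (hy : y ∈ Y) : ActiveReach E Y Z u false := by
  induction huy using Relation.ReflTransGen.head_induction_on with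
  | refl => exact start hy
  | head h _ ih =>
    have hZ' := fun d hd => hZ d (Relation.ReflTransGen.head h hd)
    exact (ih hZ').up (hZ' _ Relation.ReflTransGen.refl) h

theorem exists_up (hE : Acyclic E) (hsep : DSep E X Y Z) {u v : V} {d : Bool}
    (h : ActiveReach E Y Z u d) (hu : u ∉ Z) (hA : ∃ e ∈ X ∪ Y ∪ Z, Reaches E u e)
    (hvu : (v, u) ∈ E) : ∃ d, ActiveReach E Y Z v d := by
  refine ⟨false, ?_⟩
  by_cases hZ : ∃ e ∈ Z, Reaches E u e
  · obtain ⟨e, he, hr⟩ := hZ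
    cases d
    · exact h.up hu hvu
    · exact h.collide he hr hvu
  · have hZ' : ∀ d, Reaches E u d → d ∉ Z := fun d hd hdZ => hZ ⟨d, hdZ, hd⟩
    obtain ⟨e, he, hr⟩ := hA
    simp only [Finset.mem_union] at he
    rcases he with (he | he) | he
    · obtain ⟨d', hd'⟩ := of_reaches hr hZ' ⟨d, h⟩
      exact absurd hd' (not_of_dsep hE hsep he)
    · exact (of_reaches_start hr hZ' he).up hu hvu
    · exact absurd he (hZ' e hr)

/-- Within the family of an ancestor of `X ∪ Y ∪ Z`, active reachability propagates to all nodes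
outside `Z`. -/
theorem family_closed (hE : Acyclic E) (hsep : DSep E X Y Z) {N u q : V}
    (hA : ∃ e ∈ X ∪ Y ∪ Z, Reaches E N e) (hu : u = N ∨ (u, N) ∈ E) (hq : q = N ∨ (q, N) ∈ E)
    (huZ : u ∉ Z) (h : ∃ d, ActiveReach E Y Z u d) : ∃ d, ActiveReach E Y Z q d := by
  obtain ⟨d, hd⟩ := h
  rcases hu with rfl | hu
  · rcases hq with rfl | hq
    · exact ⟨d, hd⟩
    · exact exists_up hE hsep hd huZ hA hq
  · have hN := hd.down huZ hu
    rcases hq with rfl | hq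
    · exact ⟨true, hN⟩
    · by_cases hNZ : N ∈ Z
      · exact ⟨false, hN.collide hNZ Relation.ReflTransGen.refl hq⟩
      · exact exists_up hE hsep hN hNZ hA hq

end ActiveReach

/-- A node is d-separated by its parents from the other nodes of an ancestral set. -/
theorem Ancestral.dsep_Pre {E : Finset (V × V)} {A : Finset V} (hE : Acyclic E)
    (hA : Ancestral E A) {t : V} (ht : t ∉ A) : DSep E {t} (A \ Pre E t) (Pre E t) := by
  have descend : ∀ (l : List V) (u v y : V), (u :: v :: l).IsChain (Adjacent E) →
      (v :: l).getLast? = some y → (u, v) ∈ E →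
      Relation.TransGen (fun a b => (a, b) ∈ E) t v → y ∈ A →
      Blocked E (Pre E t) (u :: v :: l) := by
    intro l
    induction l with
    | nil =>
      intro u v y _ hlast _ htv hy
      obtain rfl : v = y := by simpa using hlast
      exact absurd (hA.of_transGen htv hy) ht
    | cons c l ih =>
      intro u v y hch hlast huv htv hy
      have hch' := (List.isChain_cons_cons.1 hch).2
      rcases (List.isChain_cons_cons.1 hch').1 with hvc | hcv
      · obtain ⟨l₁, a, w, b, l₂, e, hb⟩ :=
          ih v c y hch' (by simpa using hlast) hvc (htv.tail hvc) hy
        exact ⟨u :: l₁, a, w, b, l₂, by rw [e]; rfl, hb⟩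
      · refine ⟨[], u, v, c, l, rfl, Or.inr ⟨huv, hcv, fun d hd hdt => ?_⟩⟩
        exact hE t ((htv.trans_left hd).tail (mem_Pre.1 hdt))
  intro x hx y hy W hch _ hhead hlast
  obtain rfl : x = t := by simpa using hx
  obtain ⟨hyA, hyP⟩ := Finset.mem_sdiff.1 hy
  change W.IsChain (Adjacent E) at hch
  match W, hch, hhead, hlast with
  | [a], _, hhead, hlast =>
    obtain rfl : a = x := by simpa using hhead
    obtain rfl : a = y := by simpa using hlast
    exact absurd hyA ht
  | a :: v :: l, hch, hhead, hlast =>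
    obtain rfl : a = x := by simpa using hhead
    rcases (List.isChain_cons_cons.1 hch).1 with hav | hva
    · exact descend l a v y hch (by simpa using hlast) hav (Relation.TransGen.single hav) hyA
    · rcases l with _ | ⟨c, l⟩
      · obtain rfl : v = y := by simpa using hlast
        exact absurd (mem_Pre.2 hva) hyP
      · refine ⟨[], a, v, c, l, rfl, Or.inl ⟨mem_Pre.2 hva, ?_⟩⟩
        rcases (List.isChain_cons_cons.1 (List.isChain_cons_cons.1 hch).2).1 with h | h
        · exact Or.inr (Or.inr ⟨hva, h⟩)
        · exact Or.inr (Or.inl ⟨h, hva⟩)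

/-! ### Products of local kernels -/

/-- The indicator of the event that `b` agrees with `d` on `U`. -/
def agreeInd (U : Finset V) (d : Asg U) (b : V → Bool) : ℝ := if Agrees b U d then 1 else 0

theorem dependsOn_agreeInd (U : Finset V) (d : Asg U) : DependsOn (agreeInd U d) (U : Set V) := by
  intro b b' h
  unfold agreeInd
  have : Agrees b U d ↔ Agrees b' U d := forall_congr' fun x => by rw [h x.1 x.2]
  simp only [this]

theorem dependsOn_mul {f g : (V → Bool) → ℝ} {s t u : Set V} (hf : DependsOn f s)
    (hg : DependsOn g t) (hs : s ⊆ u) (ht : t ⊆ u) : DependsOn (fun b => f b * g b) u := by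
  intro b b' h
  change f b * g b = f b' * g b'
  rw [hf fun i hi => h i (hs hi), hg fun i hi => h i (ht hi)]

theorem probIf_agrees (μ : (V → Bool) → ℝ) (U : Finset V) (d : Asg U) :
    probIf μ (fun f => Agrees f U d) = ∑ f, agreeInd U d f * μ f := by
  simp only [probIf, agreeInd, ite_mul, one_mul, zero_mul]
  exact Finset.sum_congr rfl fun f _ => by congr

theorem probIf_agrees_and (μ : (V → Bool) → ℝ) (U : Finset V) (d : Asg U)
    (p : (V → Bool) → Prop) :
    probIf μ (fun f => Agrees f U d ∧ p f) = probIf (fun f => agreeInd U d f * μ f) p := by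
  simp only [probIf, agreeInd, ite_mul, one_mul, zero_mul]
  refine Finset.sum_congr rfl fun f _ => ?_
  split_ifs <;> tauto

theorem probIf_nonneg {μ : (V → Bool) → ℝ} (hμ : ∀ b, 0 ≤ μ b) (p : (V → Bool) → Prop) :
    0 ≤ probIf μ p := by
  refine Finset.sum_nonneg fun f _ => ?_
  split_ifs
  · exact hμ f
  · exact le_rfl

theorem probIf_mono {μ : (V → Bool) → ℝ} (hμ : ∀ b, 0 ≤ μ b) {p q : (V → Bool) → Prop}
    (h : ∀ b, p b → q b) : probIf μ p ≤ probIf μ q := by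
  refine Finset.sum_le_sum fun f _ => ?_
  split_ifs with hp hq hq
  · exact le_rfl
  · exact absurd (h f hp) hq
  · exact hμ f
  · exact le_rfl

theorem probIf_congr (μ : (V → Bool) → ℝ) {p q : (V → Bool) → Prop} (h : ∀ b, p b ↔ q b) :
    probIf μ p = probIf μ q := by
  rw [funext fun b => propext (h b)]

/-- A family of conditional probabilities, one for every node given its parents in `E`. -/
structure IsKernel (E : Finset (V × V)) (k : V → (V → Bool) → ℝ) : Prop where
  dependsOn : ∀ N, DependsOn (k N) {x | x = N ∨ (x, N) ∈ E}
  add_flip : ∀ N b, k N b + k N (Function.update b N (!b N)) = 1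

theorem sum_mul_of_add_flip (t : V) {H g : (V → Bool) → ℝ} (hH : DependsOn H {t}ᶜ)
    (hg : ∀ b, g b + g (Function.update b t (!b t)) = 1) :
    ∑ b, H b * g b = 1 / 2 * ∑ b, H b := by
  have hinv : Function.Involutive fun b : V → Bool => Function.update b t (!b t) := by
    intro b
    simp
  have hflip : ∑ b, H b * g b = ∑ b, H b * g (Function.update b t (!b t)) := by
    rw [← Equiv.sum_comp hinv.toPerm]
    refine Finset.sum_congr rfl fun b _ => ?_
    change H (Function.update b t (!b t)) * g (Function.update b t (!b t)) = _
    congr 1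
    exact hH fun i hi => Function.update_of_ne hi _ _
  have hadd : ∑ b, H b * g b + ∑ b, H b * g (Function.update b t (!b t)) = ∑ b, H b := by
    rw [← Finset.sum_add_distrib]
    exact Finset.sum_congr rfl fun b _ => by rw [← mul_add, hg, mul_one]
  linarith

/-- The nodes outside an ancestral set can be summed out. -/
theorem IsKernel.sum_out {E : Finset (V × V)} (hE : Acyclic E) {k : V → (V → Bool) → ℝ}
    (hk : IsKernel E k) {A : Finset V} (hA : Ancestral E A) {F : (V → Bool) → ℝ}
    (hF : DependsOn F (A : Set V)) :
    ∑ b, F b * ∏ N, k N b = (1 / 2) ^ Aᶜ.card * ∑ b, F b * ∏ N ∈ A, k N b := by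
  induction hn : Aᶜ.card generalizing A with
  | zero =>
    obtain rfl : A = Finset.univ := by simpa using hn
    simp
  | succ n ih =>
    obtain ⟨r, hr⟩ := hE.exists_rank
    obtain ⟨t, ht, hmin⟩ := Finset.exists_min_image Aᶜ r (Finset.card_pos.1 (by omega))
    have htA : t ∉ A := Finset.mem_compl.1 ht
    have hA' : Ancestral E (insert t A) := by
      intro a b hab hb
      rcases Finset.mem_insert.1 hb with rfl | hb
      · by_contra ha
        have := hmin a (Finset.mem_compl.2 fun h => ha (Finset.mem_insert_of_mem h))
        have := hr _ _ hab
        omega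
      · exact Finset.mem_insert_of_mem (hA a b hab hb)
    have hcard : (insert t A)ᶜ.card = n := by
      rw [Finset.compl_insert, Finset.card_erase_of_mem ht, hn, Nat.add_sub_cancel]
    rw [ih hA' (fun b b' h => hF fun i hi => h i (by simp [Finset.mem_coe.1 hi])) hcard]
    have hprod : ∀ b, F b * ∏ N ∈ insert t A, k N b = (F b * ∏ N ∈ A, k N b) * k t b := by
      intro b
      rw [Finset.prod_insert htA]
      ring
    rw [Finset.sum_congr rfl fun b _ => hprod b, sum_mul_of_add_flip t ?_ (hk.add_flip t)]
    · ring
    · intro b b' h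
      have hne : ∀ i ∈ A, b i = b' i := fun i hi => h i fun e => htA (e ▸ hi)
      change F b * _ = F b' * _
      rw [hF hne]
      congr 1
      refine Finset.prod_congr rfl fun N hN => hk.dependsOn N fun x hx => hne x ?_
      rcases hx with rfl | hx
      · exact hN
      · exact hA x N hx hN

theorem IsKernel.sum_prod {E : Finset (V × V)} (hE : Acyclic E) {k : V → (V → Bool) → ℝ}
    (hk : IsKernel E k) : ∑ b, ∏ N, k N b = 1 := by
  have := hk.sum_out hE (A := ∅) (F := fun _ => 1) (fun _ _ _ h => absurd h (by simp))
    (fun _ _ _ => rfl)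
  simpa using this

theorem IsKernel.sum_congr {E : Finset (V × V)} (hE : Acyclic E) {k k' : V → (V → Bool) → ℝ}
    (hk : IsKernel E k) (hk' : IsKernel E k') {A : Finset V} (hA : Ancestral E A)
    (h : ∀ N ∈ A, k N = k' N) {F : (V → Bool) → ℝ} (hF : DependsOn F (A : Set V)) :
    ∑ b, F b * ∏ N, k N b = ∑ b, F b * ∏ N, k' N b := by
  rw [hk.sum_out hE hA hF, hk'.sum_out hE hA hF]
  congr 1
  exact Finset.sum_congr rfl fun b _ => by
    rw [Finset.prod_congr rfl fun N hN => congrFun (h N hN) b]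

/-! ### Global Markov property -/

/-- Two assignments agreeing on `Z` may exchange their values on a set `U` disjoint from `Z`. -/
theorem sum_mul_sum_exchange {U Z : Finset V} (hUZ : Disjoint U Z) (c : Asg Z)
    {F F' G G' : (V → Bool) → ℝ} (hF : DependsOn F (U ∪ Z : Set V))
    (hF' : DependsOn F' (U ∪ Z : Set V)) (hG : DependsOn G (U : Set V)ᶜ)
    (hG' : DependsOn G' (U : Set V)ᶜ) :
    (∑ b, agreeInd Z c b * (F b * G b)) * ∑ b, agreeInd Z c b * (F' b * G' b) =
      (∑ b, agreeInd Z c b * (F b * G' b)) * ∑ b, agreeInd Z c b * (F' b * G b) := by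
  have hinv : Function.Involutive fun p : (V → Bool) × (V → Bool) =>
      ((fun x => if x ∈ U then p.1 x else p.2 x, fun x => if x ∈ U then p.2 x else p.1 x) :
        (V → Bool) × (V → Bool)) := by
    rintro ⟨b, b'⟩
    ext x <;> by_cases hx : x ∈ U <;> simp [hx]
  rw [Finset.sum_mul_sum, Finset.sum_mul_sum, ← Fintype.sum_prod_type', ← Fintype.sum_prod_type',
    ← Equiv.sum_comp hinv.toPerm]
  refine Finset.sum_congr rfl ?_
  rintro ⟨b, b'⟩ -
  change agreeInd Z c (fun x => if x ∈ U then b x else b' x) *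
      (F (fun x => if x ∈ U then b x else b' x) * G (fun x => if x ∈ U then b x else b' x)) *
      (agreeInd Z c (fun x => if x ∈ U then b' x else b x) *
      (F' (fun x => if x ∈ U then b' x else b x) * G' (fun x => if x ∈ U then b' x else b x))) = _
  have hZ : ∀ x ∈ Z, x ∉ U := fun x hx hxU => Finset.disjoint_left.1 hUZ hxU hx
  have e₁ : agreeInd Z c (fun x => if x ∈ U then b x else b' x) = agreeInd Z c b' :=
    dependsOn_agreeInd Z c fun i hi => if_neg (hZ i hi)
  have e₂ : agreeInd Z c (fun x => if x ∈ U then b' x else b x) = agreeInd Z c b :=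
    dependsOn_agreeInd Z c fun i hi => if_neg (hZ i hi)
  have e₃ : G (fun x => if x ∈ U then b x else b' x) = G b' := hG fun i hi => if_neg hi
  have e₄ : G' (fun x => if x ∈ U then b' x else b x) = G' b := hG' fun i hi => if_neg hi
  rw [e₁, e₂, e₃, e₄]
  by_cases hb : Agrees b Z c
  · by_cases hb' : Agrees b' Z c
    · have hbb' : ∀ x ∈ Z, b x = b' x := fun x hx => (hb ⟨x, hx⟩).trans (hb' ⟨x, hx⟩).symm
      have e₅ : F (fun x => if x ∈ U then b x else b' x) = F b := by
        refine hF ?_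
        rintro i (hi | hi)
        · exact if_pos hi
        · simp [hbb' i hi]
      have e₆ : F' (fun x => if x ∈ U then b' x else b x) = F' b' := by
        refine hF' ?_
        rintro i (hi | hi)
        · exact if_pos hi
        · simp [hbb' i hi]
      rw [e₅, e₆]
      ring
    · simp only [agreeInd, if_neg hb', mul_zero, zero_mul]
  · simp only [agreeInd, if_neg hb, mul_zero, zero_mul]

/-- A product of nonnegative local kernels satisfies all independences given by d-separation. -/
theorem IsKernel.indepTriple {E : Finset (V × V)} (hE : Acyclic E) {k : V → (V → Bool) → ℝ}
    (hk : IsKernel E k) (hpos : ∀ N b, 0 ≤ k N b) {X Y Z : Finset V}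
    (hdisj : PairwiseDisjoint3 X Y Z) (hsep : DSep E X Y Z) :
    IndepTriple (fun b => ∏ N, k N b) X Y Z := by
  intro a b c
  obtain ⟨-, -, hYZ⟩ := hdisj
  set A : Finset V := Finset.univ.filter fun v => ∃ e ∈ X ∪ Y ∪ Z, Reaches E v e with hAdef
  have hA : Ancestral E A := by
    intro u v huv hv
    simp only [hAdef, Finset.mem_filter, Finset.mem_univ, true_and] at hv ⊢
    obtain ⟨e, he, hr⟩ := hv
    exact ⟨e, he, Relation.ReflTransGen.head huv hr⟩
  have hsub : X ∪ Y ∪ Z ⊆ A := fun v hv =>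
    Finset.mem_filter.2 ⟨Finset.mem_univ v, v, hv, Relation.ReflTransGen.refl⟩
  have hXA : (X : Set V) ⊆ A := fun v hv => hsub (by simp [Finset.mem_coe.1 hv])
  have hYA : (Y : Set V) ⊆ A := fun v hv => hsub (by simp [Finset.mem_coe.1 hv])
  have hZA : (Z : Set V) ⊆ A := fun v hv => hsub (by simp [Finset.mem_coe.1 hv])
  set U : Finset V := Finset.univ.filter fun v => v ∉ Z ∧ ∃ d, ActiveReach E Y Z v d with hUdef
  have hmemU : ∀ v, v ∈ U ↔ v ∉ Z ∧ ∃ d, ActiveReach E Y Z v d := by simp [hUdef]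
  have hUZ : Disjoint U Z := Finset.disjoint_left.2 fun v hv => ((hmemU v).1 hv).1
  have hYU : (Y : Set V) ⊆ (U ∪ Z : Set V) := fun v hv =>
    Or.inl ((hmemU v).2 ⟨Finset.disjoint_left.1 hYZ hv, false, ActiveReach.start hv⟩)
  have hXU : (X : Set V) ⊆ (U : Set V)ᶜ := by
    intro v hv hvU
    obtain ⟨-, d, hd⟩ := (hmemU v).1 hvU
    exact ActiveReach.not_of_dsep hE hsep hv hd
  set M : V → Prop := fun N => ∃ u, (u = N ∨ (u, N) ∈ E) ∧ u ∈ U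
  set φ : (V → Bool) → ℝ := fun f => ∏ N ∈ A.filter M, k N f
  set ψ : (V → Bool) → ℝ := fun f => ∏ N ∈ A.filter fun N => ¬ M N, k N f
  have hφ : DependsOn φ (U ∪ Z : Set V) := by
    intro f f' h
    refine Finset.prod_congr rfl fun N hN => hk.dependsOn N fun q hq => h q ?_
    obtain ⟨hNA, u, hu, huU⟩ := Finset.mem_filter.1 hN
    obtain ⟨huZ, hreach⟩ := (hmemU u).1 huU
    by_cases hqZ : q ∈ Z
    · exact Or.inr hqZ
    · exact Or.inl ((hmemU q).2 ⟨hqZ, ActiveReach.family_closed hE hsep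
        (Finset.mem_filter.1 hNA).2 hu hq huZ hreach⟩)
  have hψ : DependsOn ψ (U : Set V)ᶜ := by
    intro f f' h
    refine Finset.prod_congr rfl fun N hN => hk.dependsOn N fun q hq => h q fun hqU => ?_
    exact (Finset.mem_filter.1 hN).2 ⟨q, hq, hqU⟩
  have hfactor : ∀ f, ∏ N ∈ A, k N f = φ f * ψ f := fun f =>
    (Finset.prod_filter_mul_prod_filter_not A M _).symm
  set κ : ℝ := (1 / 2) ^ Aᶜ.card
  have hX := dependsOn_agreeInd X a
  have hY := dependsOn_agreeInd Y b
  have hZ := dependsOn_agreeInd Z c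
  have hc : probIf (fun b => ∏ N, k N b) (fun f => Agrees f Z c) =
      κ * ∑ f, agreeInd Z c f * (φ f * ψ f) := by
    simp only [probIf_agrees, ← hfactor]
    exact hk.sum_out hE hA fun _ _ h => hZ fun i hi => h i (hZA hi)
  have hac : probIf (fun b => ∏ N, k N b) (fun f => Agrees f X a ∧ Agrees f Z c) =
      κ * ∑ f, agreeInd Z c f * (φ f * (agreeInd X a f * ψ f)) := by
    have := hk.sum_out hE hA (dependsOn_mul hX hZ hXA hZA)
    simp only [probIf_agrees_and, probIf_agrees]
    simp only [hfactor] at this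
    refine (Finset.sum_congr rfl fun f _ => ?_).trans
      (this.trans (congrArg _ (Finset.sum_congr rfl fun f _ => ?_))) <;> ring
  have hbc : probIf (fun b => ∏ N, k N b) (fun f => Agrees f Y b ∧ Agrees f Z c) =
      κ * ∑ f, agreeInd Z c f * (agreeInd Y b f * φ f * ψ f) := by
    have := hk.sum_out hE hA (dependsOn_mul hY hZ hYA hZA)
    simp only [probIf_agrees_and, probIf_agrees]
    simp only [hfactor] at this
    refine (Finset.sum_congr rfl fun f _ => ?_).trans
      (this.trans (congrArg _ (Finset.sum_congr rfl fun f _ => ?_))) <;> ring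
  have habc : probIf (fun b => ∏ N, k N b)
        (fun f => Agrees f X a ∧ Agrees f Y b ∧ Agrees f Z c) =
      κ * ∑ f, agreeInd Z c f * (agreeInd Y b f * φ f * (agreeInd X a f * ψ f)) := by
    have := hk.sum_out hE hA (dependsOn_mul hX (dependsOn_mul hY hZ hYA hZA) hXA subset_rfl)
    simp only [probIf_agrees_and, probIf_agrees]
    simp only [hfactor] at this
    refine (Finset.sum_congr rfl fun f _ => ?_).trans
      (this.trans (congrArg _ (Finset.sum_congr rfl fun f _ => ?_))) <;> ring
  have hexch := sum_mul_sum_exchange hUZ c (dependsOn_mul hY hφ hYU subset_rfl) hφ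
    (dependsOn_mul hX hψ hXU subset_rfl) hψ
  rw [or_iff_not_imp_left]
  intro hne
  have hprod : ∀ f, 0 ≤ ∏ N, k N f := fun f => Finset.prod_nonneg fun N _ => hpos N f
  have hle := probIf_mono hprod (p := fun f => Agrees f Y b ∧ Agrees f Z c)
    (q := fun f => Agrees f Z c) fun _ h => h.2
  have hnn := probIf_nonneg hprod fun f => Agrees f Y b ∧ Agrees f Z c
  have hne' : probIf (fun b => ∏ N, k N b) (fun f => Agrees f Z c) ≠ 0 :=
    ((lt_of_le_of_ne hnn (Ne.symm hne)).trans_le hle).ne'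
  rw [div_eq_div_iff hne hne', habc, hbc, hac, hc]
  linear_combination κ ^ 2 * hexch

/-! ### The kernels of a Bayesian network -/

/-- The conditional probability of the value of `N` in `b`; for initial nodes, its marginal
probability under `ι`. -/
def nodeKernel (B : GBN V) (N : V) (b : V → Bool) : ℝ :=
  if h : N ∈ InitSet B.edges then
    ∑ b' : Asg (InitSet B.edges), if b' ⟨N, h⟩ = b N then B.ι b' else 0
  else copyProb B N (b N) b

theorem copyProb_nonneg (B : GBN V) (N : V) (v : Bool) (b : V → Bool) : 0 ≤ copyProb B N v b := by
  unfold copyProb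
  split_ifs
  · exact B.cpt_nonneg _ _
  · exact sub_nonneg.2 (B.cpt_le_one _ _)

theorem nodeKernel_nonneg (B : GBN V) (N : V) (b : V → Bool) : 0 ≤ nodeKernel B N b := by
  unfold nodeKernel
  split_ifs
  · refine Finset.sum_nonneg fun b' _ => ?_
    split_ifs
    · exact B.ι_dist.1 b'
    · exact le_rfl
  · exact copyProb_nonneg B N _ b

theorem copyProb_add_not (B : GBN V) (N : V) (v : Bool) (b : V → Bool) :
    copyProb B N v b + copyProb B N (!v) b = 1 := by
  cases v <;> simp [copyProb]

theorem copyProb_congr (B : GBN V) (N : V) (v : Bool) {b b' : V → Bool}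
    (h : ∀ x, (x, N) ∈ B.edges → b x = b' x) : copyProb B N v b = copyProb B N v b' := by
  have : (fun p : {x // x ∈ Pre B.edges N} => b p.1) = fun p => b' p.1 :=
    funext fun p => h p.1 (mem_Pre.1 p.2)
  simp only [copyProb, this]

theorem isKernel_nodeKernel (B : GBN V) (hE : Acyclic B.edges) :
    IsKernel B.edges (nodeKernel B) where
  dependsOn N b b' h := by
    have hN : b N = b' N := h N (Or.inl rfl)
    unfold nodeKernel
    split_ifs
    · rw [hN]
    · rw [hN, copyProb_congr B N _ fun x hx => h x (Or.inr hx)]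
  add_flip N b := by
    unfold nodeKernel
    split_ifs with hN
    · rw [← Finset.sum_add_distrib, ← B.ι_dist.2]
      refine Finset.sum_congr rfl fun b' _ => ?_
      cases h : b' ⟨N, hN⟩ <;> cases h' : b N <;> simp
    · rw [Function.update_self, copyProb_congr B N (!b N) (b' := b), copyProb_add_not]
      intro x hx
      have hne : x ≠ N := by
        rintro rfl
        exact hE.not_mem_self _ hx
      exact Function.update_of_ne hne _ _

theorem distBN_eq_prod (B : GBN V) (hprod : IsProductDist B.ι) (b : V → Bool) :
    distBN B b = ∏ N, nodeKernel B N b := by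
  rw [distBN, ← Finset.prod_sdiff (Finset.subset_univ (InitSet B.edges)), mul_comm]
  congr 1
  · refine Finset.prod_congr rfl fun N hN => ?_
    rw [nodeKernel, dif_neg (Finset.mem_sdiff.1 hN).2]
  · rw [hprod, ← Finset.prod_coe_sort (InitSet B.edges)]
    refine Finset.prod_congr rfl fun x _ => ?_
    rw [nodeKernel, dif_pos x.2]

/-- Fix the values of the nodes in `S` to those of `d`. -/
def pinKernel (S : Finset V) (d : V → Bool) (k : V → (V → Bool) → ℝ) (N : V) (b : V → Bool) : ℝ :=
  if N ∈ S then if b N = d N then 1 else 0 else k N b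

theorem IsKernel.pin {E : Finset (V × V)} {k : V → (V → Bool) → ℝ} (hk : IsKernel E k)
    (S : Finset V) (d : V → Bool) : IsKernel E (pinKernel S d k) where
  dependsOn N b b' h := by
    unfold pinKernel
    rw [h N (Or.inl rfl), hk.dependsOn N h]
  add_flip N b := by
    unfold pinKernel
    split_ifs with hN h₁ h₂ h₂
    · simp [h₁] at h₂
    · simp
    · simp
    · rw [Function.update_self] at h₂
      exact absurd (Bool.not_eq.2 h₁) h₂
    · exact hk.add_flip N b

theorem prod_pinKernel (S : Finset V) (d : V → Bool) (k : V → (V → Bool) → ℝ) (b : V → Bool) :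
    ∏ N, pinKernel S d k N b =
      (if ∀ N ∈ S, b N = d N then 1 else 0) * ∏ N ∈ Finset.univ \ S, k N b := by
  rw [← Finset.prod_sdiff (Finset.subset_univ S), mul_comm]
  congr 1
  · simp only [pinKernel]
    rw [Finset.prod_congr rfl fun N hN => if_pos hN, Finset.prod_ite_zero, Finset.prod_const_one]
    congr
  · exact Finset.prod_congr rfl fun N hN => if_neg (Finset.mem_sdiff.1 hN).2

/-! ### The standard semantics is a CPT-consistent distribution -/

theorem isDist_distBN (B : GBN V) (hE : Acyclic B.edges) (hprod : IsProductDist B.ι) :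
    IsDist (distBN B) := by
  simp only [IsDist, distBN_eq_prod B hprod]
  exact ⟨fun b => Finset.prod_nonneg fun N _ => nodeKernel_nonneg B N b,
    (isKernel_nodeKernel B hE).sum_prod hE⟩

theorem marginal_distBN (B : GBN V) (hE : Acyclic B.edges) :
    marginal (distBN B) (InitSet B.edges) = B.ι := by
  funext d
  set d' : V → Bool := fun x => if h : x ∈ InitSet B.edges then d ⟨x, h⟩ else false with hd'
  have hsum := ((isKernel_nodeKernel B hE).pin (InitSet B.edges) d').sum_prod hE
  rw [marginal, probIf, ← mul_one (B.ι d), ← hsum, Finset.mul_sum]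
  refine Finset.sum_congr rfl fun b _ => ?_
  rw [prod_pinKernel]
  have hiff : (∀ N ∈ InitSet B.edges, b N = d' N) ↔ Agrees b (InitSet B.edges) d := by
    refine ⟨fun h x => ?_, fun h N hN => ?_⟩
    · rw [h x.1 x.2, hd']
      exact dif_pos x.2
    · rw [h ⟨N, hN⟩]
      simp only [hd', dif_pos hN]
  by_cases hb : Agrees b (InitSet B.edges) d
  · have hbd : (fun x : {x // x ∈ InitSet B.edges} => b x.1) = d := funext hb
    rw [if_pos hb, if_pos (hiff.2 hb), one_mul, distBN, hbd]
    congr 1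
    refine Finset.prod_congr rfl fun N hN => ?_
    rw [nodeKernel, dif_neg (Finset.mem_sdiff.1 hN).2]
  · rw [if_neg hb, if_neg (mt hiff.1 hb), zero_mul, mul_zero]

theorem strongCPT_distBN (B : GBN V) (hE : Acyclic B.edges) (hprod : IsProductDist B.ι) {X : V}
    (hX : X ∉ InitSet B.edges) : StrongCPT B (distBN B) X := by
  intro c
  have hk := isKernel_nodeKernel B hE
  set A : Finset V := Finset.univ.filter fun v =>
    Relation.TransGen (fun a b => (a, b) ∈ B.edges) v X with hAdef
  have hA : Ancestral B.edges A := by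
    intro a b hab hb
    simp only [hAdef, Finset.mem_filter, Finset.mem_univ, true_and] at hb ⊢
    exact Relation.TransGen.head hab hb
  have hXA : X ∉ A := by simpa [hAdef] using hE X
  have hPre : (Pre B.edges X : Set V) ⊆ A := fun p hp => by
    simpa [hAdef] using Relation.TransGen.single (mem_Pre.1 (Finset.mem_coe.1 hp))
  have hpin := hk.sum_congr hE (hk.pin {X} fun _ => true) hA
    (fun N hN => by
      funext b
      refine (if_neg fun h => hXA ?_).symm
      rwa [Finset.mem_singleton.1 h] at hN)
    (fun _ _ h => dependsOn_agreeInd (Pre B.edges X) c fun i hi => h i (hPre hi))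
  rw [probIf_agrees]
  simp only [distBN_eq_prod B hprod]
  rw [hpin, Finset.sum_mul, probIf]
  refine Finset.sum_congr rfl fun b _ => ?_
  rw [prod_pinKernel]
  by_cases hb : Agrees b (Pre B.edges X) c
  · have hbc : (fun x : {x // x ∈ Pre B.edges X} => b x.1) = c := funext hb
    by_cases hbX : b X = true
    · have hprodX : ∏ N, nodeKernel B N b =
          (∏ N ∈ Finset.univ \ {X}, nodeKernel B N b) * nodeKernel B X b := by
        rw [← Finset.prod_sdiff (Finset.subset_univ {X}), Finset.prod_singleton]
      rw [if_pos ⟨hbX, hb⟩, distBN_eq_prod B hprod, hprodX, if_pos (by simpa using hbX),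
        agreeInd, if_pos hb, one_mul, one_mul, nodeKernel, dif_neg hX, copyProb, if_pos hbX, hbc]
    · rw [if_neg fun h => hbX h.1, if_neg (by simpa using hbX)]
      ring
  · rw [if_neg fun h => hb h.2, agreeInd, if_neg hb]
    ring

/-! ### Uniqueness -/

theorem probIf_node_eq (B : GBN V) {μ : (V → Bool) → ℝ} (hμ : μ ∈ CptSem B) (t : V)
    (b : V → Bool) :
    probIf μ (fun f => f t = b t ∧ Agrees f (Pre B.edges t) fun x => b x.1) =
      probIf μ (fun f => Agrees f (Pre B.edges t) fun x => b x.1) * nodeKernel B t b := by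
  obtain ⟨hdist, hmarg, hcpt⟩ := hμ
  by_cases ht : t ∈ InitSet B.edges
  · have hPre : Pre B.edges t = ∅ := mem_InitSet.1 ht
    have htriv : ∀ f : V → Bool, Agrees f (Pre B.edges t) fun x => b x.1 := by
      rintro f ⟨x, hx⟩
      simp [hPre] at hx
    have hone : probIf μ (fun f => Agrees f (Pre B.edges t) fun x => b x.1) = 1 := by
      rw [← hdist.2]
      exact Finset.sum_congr rfl fun f _ => if_pos (htriv f)
    rw [hone, one_mul, nodeKernel, dif_pos ht, ← hmarg]
    have hexpand : ∀ b' : Asg (InitSet B.edges),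
        (if b' ⟨t, ht⟩ = b t then marginal μ (InitSet B.edges) b' else 0) =
          ∑ f, if b' = (fun x => f x.1) then if f t = b t then μ f else 0 else 0 := by
      intro b'
      have hiff : ∀ f : V → Bool, Agrees f (InitSet B.edges) b' ↔ b' = fun x => f x.1 :=
        fun f => ⟨fun h => funext fun x => (h x).symm, fun h x => (congrFun h x).symm⟩
      split_ifs with h
      · refine Finset.sum_congr rfl fun f _ => ?_
        by_cases hf : b' = fun x => f x.1
        · have : f t = b t := by rw [← h, hf]
          rw [if_pos ((hiff f).2 hf), if_pos hf, if_pos this]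
        · rw [if_neg (mt (hiff f).1 hf), if_neg hf]
      · refine (Finset.sum_eq_zero fun f _ => ?_).symm
        by_cases hf : b' = fun x => f x.1
        · rw [if_pos hf, if_neg]
          rintro h'
          exact h (by rw [hf, ← h'])
        · rw [if_neg hf]
    rw [Finset.sum_congr rfl fun b' _ => hexpand b', Finset.sum_comm]
    refine Finset.sum_congr rfl fun f _ => ?_
    rw [Finset.sum_ite_eq' Finset.univ, if_pos (Finset.mem_univ _)]
    by_cases hf : f t = b t
    · rw [if_pos ⟨hf, htriv f⟩, if_pos hf]
    · rw [if_neg fun h => hf h.1, if_neg hf]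
  · have htrue := hcpt t ht fun x => b x.1
    rw [nodeKernel, dif_neg ht, copyProb]
    cases hbt : b t
    · have hsplit : probIf μ (fun f => f t = false ∧ Agrees f (Pre B.edges t) fun x => b x.1) +
          probIf μ (fun f => f t = true ∧ Agrees f (Pre B.edges t) fun x => b x.1) =
          probIf μ (fun f => Agrees f (Pre B.edges t) fun x => b x.1) := by
        simp only [probIf]
        rw [← Finset.sum_add_distrib]
        refine Finset.sum_congr rfl fun f _ => ?_
        by_cases h : Agrees f (Pre B.edges t) fun x => b x.1
        · rcases Bool.eq_false_or_eq_true (f t) with hf | hf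
          · rw [if_neg fun h' => by simp [hf] at h', if_pos ⟨hf, h⟩, if_pos h, zero_add]
          · rw [if_pos ⟨hf, h⟩, if_neg fun h' => by simp [hf] at h', if_pos h, add_zero]
        · rw [if_neg fun h' => h h'.2, if_neg fun h' => h h'.2, if_neg h, add_zero]
      rw [if_neg (by simp)]
      linarith
    · rw [if_pos rfl]
      exact htrue

theorem probIf_ancestral_eq (B : GBN V) (hE : Acyclic B.edges) {μ : (V → Bool) → ℝ}
    (hμ : μ ∈ CptISem B (DSepSet B.edges)) {A : Finset V} (hA : Ancestral B.edges A)
    (b : V → Bool) :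
    probIf μ (fun f => Agrees f A fun x => b x.1) = ∏ N ∈ A, nodeKernel B N b := by
  obtain ⟨hcpt, hI⟩ := hμ
  have hpos := hcpt.1.1
  obtain ⟨r, hr⟩ := hE.exists_rank
  induction hn : A.card generalizing A with
  | zero =>
    obtain rfl := Finset.card_eq_zero.1 hn
    rw [Finset.prod_empty, ← hcpt.1.2]
    refine Finset.sum_congr rfl fun f _ => if_pos ?_
    rintro ⟨x, hx⟩
    simp at hx
  | succ n ih =>
    obtain ⟨t, ht, hmax⟩ := Finset.exists_max_image A r (Finset.card_pos.1 (by omega))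
    have hA' : Ancestral B.edges (A.erase t) := by
      intro x y hxy hy
      obtain ⟨-, hyA⟩ := Finset.mem_erase.1 hy
      refine Finset.mem_erase.2 ⟨?_, hA x y hxy hyA⟩
      rintro rfl
      have := hmax y hyA
      have := hr _ _ hxy
      omega
    have hPre : ∀ x ∈ Pre B.edges t, x ∈ A.erase t := fun x hx =>
      Finset.mem_erase.2 ⟨fun e => hE.not_mem_self t (mem_Pre.1 (e ▸ hx)),
        hA x t (mem_Pre.1 hx) ht⟩
    have ih' := ih hA' (by rw [Finset.card_erase_of_mem ht, hn, Nat.add_sub_cancel])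
    have hdisj : PairwiseDisjoint3 {t} (A.erase t \ Pre B.edges t) (Pre B.edges t) := by
      refine ⟨?_, ?_, Finset.sdiff_disjoint⟩
      · simp
      · exact Finset.disjoint_singleton_left.2 fun h => hE.not_mem_self t (mem_Pre.1 h)
    have hind := (hI (show ({t}, A.erase t \ Pre B.edges t, Pre B.edges t) ∈ DSepSet B.edges from
      ⟨hdisj, hA'.dsep_Pre hE (Finset.notMem_erase t A)⟩)).2
      (fun x => b x.1) (fun x => b x.1) (fun x => b x.1)
    have hiff : ∀ f : V → Bool, (Agrees f (A.erase t \ Pre B.edges t) (fun x => b x.1) ∧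
        Agrees f (Pre B.edges t) fun x => b x.1) ↔ Agrees f (A.erase t) fun x => b x.1 := by
      refine fun f => ⟨fun h x => ?_, fun h => ⟨fun x => ?_, fun x => h ⟨x, hPre x x.2⟩⟩⟩
      · by_cases hx : x.1 ∈ Pre B.edges t
        · exact h.2 ⟨x, hx⟩
        · exact h.1 ⟨x, Finset.mem_sdiff.2 ⟨x.2, hx⟩⟩
      · exact h ⟨x, (Finset.mem_sdiff.1 x.2).1⟩
    have hsing : ∀ f : V → Bool, Agrees f {t} (fun x => b x.1) ↔ f t = b t := by
      refine fun f => ⟨fun h => h ⟨t, Finset.mem_singleton_self t⟩, ?_⟩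
      rintro h ⟨x, hx⟩
      obtain rfl := Finset.mem_singleton.1 hx
      exact h
    have hiff' : ∀ f : V → Bool, (Agrees f {t} (fun x => b x.1) ∧
        Agrees f (A.erase t \ Pre B.edges t) (fun x => b x.1) ∧
        Agrees f (Pre B.edges t) fun x => b x.1) ↔ Agrees f A fun x => b x.1 := by
      intro f
      rw [hiff, hsing]
      refine ⟨fun h x => ?_, fun h => ⟨h ⟨t, ht⟩, fun x => h ⟨x, Finset.mem_of_mem_erase x.2⟩⟩⟩
      by_cases hx : x.1 = t
      · change f x.1 = b x.1
        rw [hx]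
        exact h.1
      · exact h.2 ⟨x, Finset.mem_erase.2 ⟨hx, x.2⟩⟩
    have hnode := probIf_node_eq B hcpt t b
    dsimp only at hind
    rw [probIf_congr μ hiff, probIf_congr μ hiff',
      probIf_congr μ (fun f => and_congr_left' (hsing f)), hnode] at hind
    have hle : probIf μ (fun f => Agrees f A fun x => b x.1) ≤
        probIf μ (fun f => Agrees f (A.erase t) fun x => b x.1) :=
      probIf_mono hpos fun f h x => h ⟨x, Finset.mem_of_mem_erase x.2⟩
    have hle' : probIf μ (fun f => Agrees f (A.erase t) fun x => b x.1) ≤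
        probIf μ (fun f => Agrees f (Pre B.edges t) fun x => b x.1) :=
      probIf_mono hpos fun f h x => h ⟨x, hPre x x.2⟩
    have hnn := probIf_nonneg hpos fun f => Agrees f A fun x => b x.1
    rw [← Finset.mul_prod_erase A _ ht, ← ih']
    by_cases h₀ : probIf μ (fun f => Agrees f (A.erase t) fun x => b x.1) = 0
    · rw [h₀, mul_zero]
      exact le_antisymm (hle.trans h₀.le) hnn
    · have hne : probIf μ (fun f => Agrees f (Pre B.edges t) fun x => b x.1) ≠ 0 :=
        ((lt_of_le_of_ne (hnn.trans hle) (Ne.symm h₀)).trans_le hle').ne'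
      have := hind.resolve_left h₀
      rwa [mul_div_cancel_left₀ _ hne, div_eq_iff h₀] at this

theorem eq_distBN_of_mem_CptISem (B : GBN V) (hE : Acyclic B.edges) (hprod : IsProductDist B.ι)
    {μ : (V → Bool) → ℝ} (hμ : μ ∈ CptISem B (DSepSet B.edges)) : μ = distBN B := by
  funext b
  rw [distBN_eq_prod B hprod, ← probIf_ancestral_eq B hE hμ (A := Finset.univ)
    (fun a _ _ _ => Finset.mem_univ a) b, probIf, Finset.sum_eq_single b]
  · exact (if_pos fun _ => rfl).symm
  · exact fun f _ hf => if_neg fun h => hf (funext fun x => h ⟨x, Finset.mem_univ x⟩)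
  · exact fun h => absurd (Finset.mem_univ b) h

theorem distBN_mem_CptISem (B : GBN V) (hE : Acyclic B.edges) (hprod : IsProductDist B.ι) :
    distBN B ∈ CptISem B (DSepSet B.edges) := by
  refine ⟨⟨isDist_distBN B hE hprod, marginal_distBN B hE,
    fun X hX => strongCPT_distBN B hE hprod hX⟩, ?_⟩
  rintro ⟨X, Y, Z⟩ ⟨hdisj, hsep⟩
  refine ⟨hdisj, ?_⟩
  rw [funext (distBN_eq_prod B hprod)]
  exact (isKernel_nodeKernel B hE).indepTriple hE (nodeKernel_nonneg B) hdisj hsep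


/-- For an acyclic GBN `B` with product initial distribution and
`I = d-sep(G)`, the CPT-I semantics is the singleton `{dist_BN(B)}`. -/
theorem stmt2 {V : Type} [Fintype V] [DecidableEq V]
    (B : GBN V) (hacyc : Acyclic B.edges) (hprod : IsProductDist B.ι) :
    CptISem B (DSepSet B.edges) = {distBN B} := by
  exact Set.Subset.antisymm
    (fun μ hμ => Set.mem_singleton_iff.2 (eq_distBN_of_mem_CptISem B hacyc hprod hμ))
    (Set.singleton_subset_iff.2 (distBN_mem_CptISem B hacyc hprod))

end GBNPaper
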